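/- Leibniz rule in tangent cohomology: for every bilinear map μ ∈ C² and all multilinear maps h ∈ C^m, f ∈ C^n, g ∈ C^p with δ_μ h = 0, δ_μ f = 0 and δ_μ g = 0, one has [h, f ⌣ g] − [h,f] ⌣ g − (−1)^{(m−1)n} f ⌣ [h,g] = −(−1)^{p−1} δ_μ⟨h|fg⟩; in particular, the failure of the left Leibniz rule on cocycles is a coboundary of δ_μ, so the Leibniz rule [h, f ⌣ g] = [h,f] ⌣ g + (−1)^{(m−1)n} f ⌣ [h,g] holds in the tangent cohomology H_μ(C). -/

import Mathlib

open Finset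

section OperadPrelude

variable {K : Type*} [CommRing K] {L : Type*} [AddCommGroup L] [Module K L]

/-- `C K L n`: the `K`-module of `n`-multilinear maps `L^n → L`
(the degree-`n` component of the endomorphism operad of `L`). -/
abbrev C (K L : Type*) [CommRing K] [AddCommGroup L] [Module K L] (n : ℕ) :=
  MultilinearMap K (fun _ : Fin n => L) L

/-- The extension of an `n`-ary multilinear operation to sequences `ℕ → L`:
it evaluates `f` on the first `n` entries of the sequence.  Two `n`-ary
multilinear operations are equal iff their extensions are equal, so operadic
identities are stated as identities between extensions. -/
def ex {n : ℕ} (f : C K L n) : (ℕ → L) → L := fun x => f fun j => x j.1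

/-- The sign `(-1)^e` for an integer exponent `e`. -/
def sgn (e : ℤ) : ℤ := (((-1 : ℤˣ) ^ e : ℤˣ) : ℤ)

/-- Partial composition `f ∘ᵢ g`, where `n = deg g`:
`(f ∘ᵢ g)(x₀, x₁, …) = (-1)^{i(n-1)} f(x₀,…,x_{i-1}, g(x_i,…,x_{i+n-1}), x_{i+n},…)`. -/
def pc (n i : ℕ) (f g : (ℕ → L) → L) : (ℕ → L) → L :=
  fun x => sgn ((i : ℤ) * ((n : ℤ) - 1)) •
    f fun j => if j < i then x j else if j = i then g (fun k => x (i + k)) else x (j + n - 1)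

/-- Total composition `f ∘ g := Σ_{i=0}^{m-1} f ∘ᵢ g`, where `m = deg f`, `n = deg g`. -/
def tc (m n : ℕ) (f g : (ℕ → L) → L) : (ℕ → L) → L :=
  fun x => ∑ i ∈ Finset.range m, pc n i f g x

/-- The associator `(h, f, g) := (h ∘ f) ∘ g − h ∘ (f ∘ g)` of the total composition,
where `m = deg h`, `n = deg f`, `p = deg g`. -/
def assoc (m n p : ℕ) (h f g : (ℕ → L) → L) : (ℕ → L) → L :=
  fun x => tc (m + n - 1) p (tc m n h f) g x - tc m (n + p - 1) h (tc n p f g) x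

/-- The brace `⟨h|fg⟩ := Σ (h ∘ᵢ f) ∘ⱼ g`, summed over `0 ≤ i ≤ m-2`,
`i + n ≤ j ≤ m + n - 2`, where `m = deg h`, `n = deg f`, `p = deg g`. -/
def br2 (m n p : ℕ) (h f g : (ℕ → L) → L) : (ℕ → L) → L :=
  fun x => ∑ i ∈ Finset.range (m - 1), ∑ j ∈ Finset.Icc (i + n) (m + n - 2),
    pc p j (pc n i h f) g x

/-- The triple brace `⟨h|fgb⟩ := Σ ((h ∘ᵢ f) ∘ⱼ g) ∘ₖ b`, summed over `0 ≤ i ≤ m-3`,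
`i + n ≤ j ≤ m + n - 3`, `j + p ≤ k ≤ m + n + p - 3`, where
`m = deg h`, `n = deg f`, `p = deg g`, `q = deg b`. -/
def br3 (m n p q : ℕ) (h f g b : (ℕ → L) → L) : (ℕ → L) → L :=
  fun x => ∑ i ∈ Finset.range (m - 2), ∑ j ∈ Finset.Icc (i + n) (m + n - 3),
    ∑ k ∈ Finset.Icc (j + p) (m + n + p - 3),
      pc q k (pc p j (pc n i h f) g) b x

/-- The Gerstenhaber bracket `[f,g] := f ∘ g − (-1)^{|f||g|} g ∘ f`,
where `m = deg f`, `n = deg g`, `|f| = m - 1`, `|g| = n - 1`. -/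
def gb (m n : ℕ) (f g : (ℕ → L) → L) : (ℕ → L) → L :=
  fun x => tc m n f g x - sgn (((m : ℤ) - 1) * ((n : ℤ) - 1)) • tc n m g f x

/-- The cup product `f ⌣ g := (-1)^{deg f} (μ ∘₀ f) ∘_{deg f} g`,
where `m = deg f`, `n = deg g`. -/
def cup (μ : C K L 2) (m n : ℕ) (f g : (ℕ → L) → L) : (ℕ → L) → L :=
  fun x => sgn (m : ℤ) • pc n m (pc m 0 (ex μ) f) g x

/-- The coboundary operator `δ_μ f := −[f, μ]`, where `m = deg f`. -/
def delta (μ : C K L 2) (m : ℕ) (f : (ℕ → L) → L) : (ℕ → L) → L :=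
  fun x => - gb m 2 f (ex μ) x


/-! ### Signs -/

theorem sgn_add' (a b : ℤ) : sgn (a + b) = sgn a * sgn b := by
  simp [sgn, zpow_add]

theorem sgn_neg' (a : ℤ) : sgn (-a) = sgn a := by
  simp [sgn]

theorem sgn_sub' (a b : ℤ) : sgn (a - b) = sgn a * sgn b := by
  rw [sub_eq_add_neg, sgn_add', sgn_neg']

theorem sgn_one' : sgn 1 = -1 := by simp [sgn]

theorem sgn_zero' : sgn 0 = 1 := by simp [sgn]

theorem sgn_cases (a : ℤ) : sgn a = 1 ∨ sgn a = -1 := by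
  unfold sgn
  rcases Int.units_eq_one_or ((-1 : ℤˣ) ^ a) with h | h <;> simp [h]

/-! ### Insertion of an operation into a sequence -/

/-- The sequence in which the block of length `n` at position `i` is replaced by its value. -/
def ins (n i : ℕ) (g : (ℕ → L) → L) (x : ℕ → L) : ℕ → L :=
  fun j => if j < i then x j else if j = i then g (fun k => x (i + k)) else x (j + n - 1)

theorem pc_apply (n i : ℕ) (f g : (ℕ → L) → L) (x : ℕ → L) :
    pc n i f g x = sgn ((i : ℤ) * ((n : ℤ) - 1)) • f (ins n i g x) := rfl

/-- `F` depends only on the first `n` entries. -/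
def Loc (n : ℕ) (F : (ℕ → L) → L) : Prop :=
  ∀ x y : ℕ → L, (∀ j < n, x j = y j) → F x = F y

/-- `F` is additive in slot `k`. -/
def LinAt (k : ℕ) (F : (ℕ → L) → L) : Prop :=
  ∀ x : ℕ → L, ∃ φ : L →+ L, ∀ a, F (Function.update x k a) = φ a

theorem loc_ex {n : ℕ} (f : C K L n) : Loc n (ex f) := by
  intro x y h
  unfold ex
  congr 1
  funext j
  exact h j.1 j.2

theorem linAt_ex {n : ℕ} (f : C K L n) {k : ℕ} (hk : k < n) : LinAt k (ex f) := by
  intro x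
  refine ⟨(f.toLinearMap (fun j => x j.1) ⟨k, hk⟩).toAddMonoidHom, fun a => ?_⟩
  simp only [LinearMap.toAddMonoidHom_coe, MultilinearMap.toLinearMap_apply]
  unfold ex
  congr 1
  funext j
  by_cases h : j = ⟨k, hk⟩
  · subst h; simp
  · have h' : j.1 ≠ k := fun e => h (Fin.ext e)
    simp [Function.update_of_ne h, Function.update_of_ne h']

theorem ins_eq_update (n i : ℕ) (g : (ℕ → L) → L) (x : ℕ → L) :
    ins n i g x = Function.update (ins n i 0 x) i (g (fun k => x (i + k))) := by
  funext j
  unfold ins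
  by_cases h : j = i
  · subst h; simp
  · simp [h]

theorem linAt_ins {k : ℕ} {H : (ℕ → L) → L} (hH : LinAt k H) (n : ℕ) (x : ℕ → L) :
    ∃ φ : L →+ L, ∀ G, H (ins n k G x) = φ (G (fun l => x (k + l))) := by
  obtain ⟨φ, hφ⟩ := hH (ins n k 0 x)
  exact ⟨φ, fun G => by rw [ins_eq_update, hφ]⟩

/-- Right linearity of partial composition, packaged as an additive map. -/
theorem pc_right {k : ℕ} {H : (ℕ → L) → L} (hH : LinAt k H) (n : ℕ) :
    ∃ φ : ((ℕ → L) → L) →+ ((ℕ → L) → L), ∀ G, pc n k H G = φ G := by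
  refine ⟨⟨⟨fun G => pc n k H G, ?_⟩, ?_⟩, fun G => rfl⟩
  · funext x
    obtain ⟨φ, hφ⟩ := linAt_ins hH n x
    simp [pc_apply, hφ]
  · intro a b
    funext x
    obtain ⟨φ, hφ⟩ := linAt_ins hH n x
    simp [pc_apply, hφ]

theorem pc_right_smul {k : ℕ} {H : (ℕ → L) → L} (hH : LinAt k H) (n : ℕ) (c : ℤ)
    (G : (ℕ → L) → L) : pc n k H (c • G) = c • pc n k H G := by
  obtain ⟨φ, hφ⟩ := pc_right hH n
  simp only [hφ, map_zsmul]

theorem pc_right_sub {k : ℕ} {H : (ℕ → L) → L} (hH : LinAt k H) (n : ℕ)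
    (G GG : (ℕ → L) → L) : pc n k H (G - GG) = pc n k H G - pc n k H GG := by
  obtain ⟨φ, hφ⟩ := pc_right hH n
  simp only [hφ, map_sub]

theorem pc_right_zero {k : ℕ} {H : (ℕ → L) → L} (hH : LinAt k H) (n : ℕ) :
    pc n k H 0 = 0 := by
  obtain ⟨φ, hφ⟩ := pc_right hH n
  simp only [hφ, map_zero]

theorem pc_right_sum {k : ℕ} {H : (ℕ → L) → L} (hH : LinAt k H) (n : ℕ) {ι : Type*}
    (s : Finset ι) (G : ι → (ℕ → L) → L) :
    pc n k H (∑ a ∈ s, G a) = ∑ a ∈ s, pc n k H (G a) := by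
  obtain ⟨φ, hφ⟩ := pc_right hH n
  simp only [hφ, map_sum]

/-- Left linearity of partial composition. -/
def pcL (n k : ℕ) (G : (ℕ → L) → L) : ((ℕ → L) → L) →+ ((ℕ → L) → L) where
  toFun H := pc n k H G
  map_zero' := by funext x; simp [pc_apply]
  map_add' a b := by funext x; simp [pc_apply]

theorem pc_left_smul (n k : ℕ) (c : ℤ) (H G : (ℕ → L) → L) :
    pc n k (c • H) G = c • pc n k H G := map_zsmul (pcL n k G) c H

theorem pc_left_sub (n k : ℕ) (H H' G : (ℕ → L) → L) :
    pc n k (H - H') G = pc n k H G - pc n k H' G := map_sub (pcL n k G) H H'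

theorem pc_left_add (n k : ℕ) (H H' G : (ℕ → L) → L) :
    pc n k (H + H') G = pc n k H G + pc n k H' G := map_add (pcL n k G) H H'

theorem pc_left_zero (n k : ℕ) (G : (ℕ → L) → L) :
    pc n k 0 G = 0 := map_zero (pcL n k G)

theorem pc_left_sum (n k : ℕ) {ι : Type*} (s : Finset ι) (H : ι → (ℕ → L) → L)
    (G : (ℕ → L) → L) :
    pc n k (∑ a ∈ s, H a) G = ∑ a ∈ s, pc n k (H a) G := map_sum (pcL n k G) H s

theorem ins_comm {n p i j : ℕ} (hij : i < j) {F : (ℕ → L) → L} (hF : Loc n F)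
    (G : (ℕ → L) → L) (x : ℕ → L) :
    ins n i F (ins p (j + n - 1) G x) = ins p j G (ins n i F x) := by
  funext l
  rcases lt_trichotomy l i with h | h | h
  · simp only [ins]
    rw [if_pos h, if_pos (by omega), if_pos (by omega), if_pos h]
  · subst h
    simp only [ins]
    rw [if_neg (by omega), if_pos trivial, if_pos hij, if_neg (by omega), if_pos trivial]
    apply hF
    intro k hk
    rw [if_pos (by omega)]
  · have e : ins n i F (ins p (j + n - 1) G x) l = ins p (j + n - 1) G x (l + n - 1) := by
      unfold ins
      rw [if_neg (by omega), if_neg (by omega)]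
    rw [e]
    rcases lt_trichotomy l j with h' | h' | h'
    · simp only [ins]
      rw [if_pos (by omega), if_pos h', if_neg (by omega), if_neg (by omega)]
    · subst h'
      simp only [ins]
      rw [if_neg (by omega), if_pos trivial, if_neg (by omega), if_pos trivial]
      congr 1
      funext k
      rw [if_neg (by omega), if_neg (by omega)]
      congr 1; omega
    · simp only [ins]
      rw [if_neg (by omega), if_neg (by omega), if_neg (by omega), if_neg (by omega),
        if_neg (by omega), if_neg (by omega)]
      congr 1; omega

theorem ins_nest {n p i k : ℕ} (hk : k < n) (F G : (ℕ → L) → L) (x : ℕ → L) :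
    ins n i F (ins p (i + k) G x) = ins (n + p - 1) i (fun y => F (ins p k G y)) x := by
  funext l
  rcases lt_trichotomy l i with h | h | h
  · simp only [ins]
    rw [if_pos h, if_pos (by omega), if_pos h]
  · subst h
    simp only [ins]
    rw [if_neg (by omega), if_pos trivial, if_neg (by omega), if_pos trivial]
    congr 1
    funext a
    simp only [ins]
    rcases lt_trichotomy a k with h | h | h
    · rw [if_pos (by omega), if_pos h]
    · subst h
      rw [if_neg (by omega), if_pos rfl, if_neg (by omega), if_pos rfl]
      congr 1
      funext b
      congr 1; omega
    · rw [if_neg (by omega), if_neg (by omega), if_neg (by omega), if_neg (by omega)]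
      congr 1; omega
  · simp only [ins]
    rw [if_neg (by omega), if_neg (by omega), if_neg (by omega), if_neg (by omega),
      if_neg (by omega), if_neg (by omega)]
    congr 1; omega

/-- Parallel composition law. -/
theorem pc_comm {n p i j : ℕ} (hij : i < j) {F : (ℕ → L) → L} (hF : Loc n F)
    (H G : (ℕ → L) → L) :
    pc p (j + n - 1) (pc n i H F) G
      = sgn (((n : ℤ) - 1) * ((p : ℤ) - 1)) • pc n i (pc p j H G) F := by
  funext x
  rw [Pi.smul_apply]
  simp only [pc_apply]
  rw [ins_comm hij hF, smul_smul, smul_smul, smul_smul, ← sgn_add', ← sgn_add', ← sgn_add',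
    Nat.cast_sub (by omega)]
  congr 2
  push_cast
  ring

/-- Sequential composition law. -/
theorem pc_nest {n p i k : ℕ} (hk : k < n) {H : (ℕ → L) → L} (hH : LinAt i H)
    (F G : (ℕ → L) → L) :
    pc p (i + k) (pc n i H F) G = pc (n + p - 1) i H (pc p k F G) := by
  have e : pc p k F G = sgn ((k : ℤ) * ((p : ℤ) - 1)) • (fun y => F (ins p k G y)) := rfl
  rw [e, pc_right_smul hH]
  funext x
  rw [Pi.smul_apply]
  simp only [pc_apply]
  rw [ins_nest hk, smul_smul, smul_smul, ← sgn_add', ← sgn_add', Nat.cast_sub (by omega)]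
  congr 2
  push_cast
  ring

theorem linAt_pc {n i j : ℕ} (hij : i < j) {H F : (ℕ → L) → L} (hH : LinAt j H)
    (hF : Loc n F) : LinAt (j + n - 1) (pc n i H F) := by
  intro x
  obtain ⟨φ, hφ⟩ := hH (ins n i F x)
  refine ⟨sgn ((i : ℤ) * ((n : ℤ) - 1)) • φ, fun a => ?_⟩
  rw [pc_apply, AddMonoidHom.smul_apply, ← hφ]
  congr 2
  funext l
  rcases lt_trichotomy l i with h | h | h
  · rw [Function.update_of_ne (by omega)]
    simp only [ins]
    rw [if_pos h, if_pos h, Function.update_of_ne (by omega)]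
  · subst h
    rw [Function.update_of_ne (by omega)]
    simp only [ins]
    rw [if_neg (by omega), if_pos trivial, if_neg (by omega), if_pos trivial]
    apply hF
    intro k hk
    rw [Function.update_of_ne (by omega)]
  · by_cases h' : l = j
    · subst h'
      simp only [ins]
      rw [if_neg (by omega), if_neg (by omega)]
      simp
    · rw [Function.update_of_ne h']
      simp only [ins]
      rw [if_neg (by omega), if_neg (by omega), if_neg (by omega), if_neg (by omega),
        Function.update_of_ne (by omega)]

/-! ### Total compositions and braces as functions -/

theorem tc_eq (m n : ℕ) (f g : (ℕ → L) → L) :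
    tc m n f g = ∑ i ∈ range m, pc n i f g := by
  funext x; simp [tc]

theorem gb_eq (m n : ℕ) (f g : (ℕ → L) → L) :
    gb m n f g = tc m n f g - sgn (((m : ℤ) - 1) * ((n : ℤ) - 1)) • tc n m g f := by
  funext x; simp [gb]

theorem cup_eq (μ : C K L 2) (m n : ℕ) (f g : (ℕ → L) → L) :
    cup μ m n f g = sgn (m : ℤ) • pc n m (pc m 0 (ex μ) f) g := by
  funext x; simp [cup]

theorem delta_eq (μ : C K L 2) (m : ℕ) (f : (ℕ → L) → L) :
    delta μ m f = - gb m 2 f (ex μ) := by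
  funext x; simp [delta]

/-- Sum over pairs `i < j < m`. -/
def S2 {A : Type*} [AddCommGroup A] (m : ℕ) (T : ℕ → ℕ → A) : A :=
  ∑ i ∈ range m, ∑ j ∈ range m, if i < j then T i j else 0

theorem S2_congr {A : Type*} [AddCommGroup A] {m : ℕ} {T T' : ℕ → ℕ → A}
    (h : ∀ i j, i < j → j < m → T i j = T' i j) : S2 m T = S2 m T' := by
  unfold S2
  refine sum_congr rfl fun i _ => sum_congr rfl fun j hj => ?_
  split_ifs with hij
  · exact h i j hij (mem_range.1 hj)
  · rfl

theorem S2_map {A B : Type*} [AddCommGroup A] [AddCommGroup B] (φ : A →+ B) (m : ℕ)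
    (T : ℕ → ℕ → A) : φ (S2 m T) = S2 m fun i j => φ (T i j) := by
  simp only [S2, map_sum, apply_ite φ, map_zero]

theorem S2_add {A : Type*} [AddCommGroup A] (m : ℕ) (T T' : ℕ → ℕ → A) :
    S2 m (fun i j => T i j + T' i j) = S2 m T + S2 m T' := by
  simp only [S2, ← sum_add_distrib]
  refine sum_congr rfl fun i _ => sum_congr rfl fun j hj => ?_
  split_ifs <;> simp

theorem S2_sum {A ι : Type*} [AddCommGroup A] (m : ℕ) (s : Finset ι) (T : ι → ℕ → ℕ → A) :
    S2 m (fun i j => ∑ k ∈ s, T k i j) = ∑ k ∈ s, S2 m (T k) := by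
  unfold S2
  symm
  rw [sum_comm]
  refine sum_congr rfl fun i _ => ?_
  rw [sum_comm]
  refine sum_congr rfl fun j _ => ?_
  split_ifs <;> simp

theorem br2_eq (m n p : ℕ) (h f g : (ℕ → L) → L) :
    br2 m n p h f g = S2 m fun i j => pc p (j + n - 1) (pc n i h f) g := by
  have e : br2 m n p h f g = ∑ i ∈ range (m - 1), ∑ j ∈ Icc (i + n) (m + n - 2),
      pc p j (pc n i h f) g := by
    funext x; simp [br2]
  rw [e]
  unfold S2
  rcases m with _ | m
  · simp
  rw [sum_range_succ]
  have hz : (∑ j ∈ range (m + 1), if m < j then pc p (j + n - 1) (pc n m h f) g else 0) = 0 := by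
    refine sum_eq_zero fun j hj => ?_
    have := mem_range.1 hj
    rw [if_neg (by omega)]
  rw [hz, add_zero]
  refine sum_congr rfl fun i hi => ?_
  have hi : i < m := by simpa using hi
  rw [← sum_filter]
  symm
  refine sum_nbij' (fun j => j + n - 1) (fun j => j + 1 - n) ?_ ?_ ?_ ?_ ?_
  · intro j hj; simp only [mem_filter, mem_range, mem_Icc] at hj ⊢; omega
  · intro j hj; simp only [mem_filter, mem_range, mem_Icc] at hj ⊢; omega
  · intro j hj; simp only [mem_filter, mem_range] at hj ⊢; omega
  · intro j hj; simp only [mem_Icc] at hj ⊢; omega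
  · intro j hj; rfl

/-! ### Splitting sums -/

theorem split_slots {A : Type*} [AddCommGroup A] {m n p i j : ℕ} (hij : i < j) (hj : j < m)
    (T : ℕ → A) :
    ∑ k ∈ range (m + n + p - 2), T k
      = (∑ k ∈ range m, if k < i then T k else 0) + ∑ k ∈ range n, T (i + k)
        + (∑ k ∈ range m, if i < k ∧ k < j then T (k + n - 1) else 0)
        + ∑ k ∈ range p, T (j + n - 1 + k)
        + ∑ k ∈ range m, if j < k then T (k + n + p - 2) else 0 := by
  obtain ⟨a, rfl⟩ : ∃ a, j = i + 1 + a := ⟨j - i - 1, by omega⟩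
  obtain ⟨b, rfl⟩ : ∃ b, m = i + 1 + a + 1 + b := ⟨m - (i + 1 + a) - 1, by omega⟩
  have e1 : (∑ k ∈ range (i + 1 + a + 1 + b), if k < i then T k else 0) = ∑ k ∈ range i, T k := by
    rw [← sum_filter]
    refine sum_congr ?_ fun _ _ => rfl
    ext k; simp only [mem_filter, mem_range]; omega
  have e2 : (∑ k ∈ range (i + 1 + a + 1 + b), if i < k ∧ k < i + 1 + a then T (k + n - 1) else 0)
      = ∑ k ∈ range a, T (i + n + k) := by
    rw [← sum_filter]
    refine sum_nbij' (fun k => k - (i + 1)) (fun k => i + 1 + k) ?_ ?_ ?_ ?_ ?_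
    · intro k hk; simp only [mem_filter, mem_range] at hk ⊢; omega
    · intro k hk; simp only [mem_filter, mem_range] at hk ⊢; omega
    · intro k hk; simp only [mem_filter, mem_range] at hk ⊢; omega
    · intro k hk; simp only [mem_range] at hk ⊢; omega
    · intro k hk; simp only [mem_filter, mem_range] at hk ⊢; congr 1; omega
  have e3 : (∑ k ∈ range (i + 1 + a + 1 + b), if i + 1 + a < k then T (k + n + p - 2) else 0)
      = ∑ k ∈ range b, T (i + n + a + p + k) := by
    rw [← sum_filter]
    refine sum_nbij' (fun k => k - (i + 1 + a + 1)) (fun k => i + 1 + a + 1 + k) ?_ ?_ ?_ ?_ ?_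
    · intro k hk; simp only [mem_filter, mem_range] at hk ⊢; omega
    · intro k hk; simp only [mem_filter, mem_range] at hk ⊢; omega
    · intro k hk; simp only [mem_filter, mem_range] at hk ⊢; omega
    · intro k hk; simp only [mem_range] at hk ⊢; omega
    · intro k hk; simp only [mem_filter, mem_range] at hk ⊢; congr 1; omega
  rw [e1, e2, e3]
  have e4 : i + 1 + a + 1 + b + n + p - 2 = i + n + a + p + b := by omega
  have e5 : i + 1 + a + n - 1 = i + n + a := by omega
  rw [e4, e5, sum_range_add, sum_range_add, sum_range_add, sum_range_add]

theorem split_one {A : Type*} [AddCommGroup A] {m k : ℕ} (hk : k < m) (T : ℕ → A) :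
    ∑ j ∈ range (m + 1), T j
      = (∑ j ∈ range m, if j < k then T j else 0) + T k + T (k + 1)
        + ∑ j ∈ range m, if k < j then T (j + 1) else 0 := by
  obtain ⟨b, rfl⟩ : ∃ b, m = k + 1 + b := ⟨m - k - 1, by omega⟩
  have e1 : (∑ j ∈ range (k + 1 + b), if j < k then T j else 0) = ∑ j ∈ range k, T j := by
    rw [← sum_filter]
    refine sum_congr ?_ fun _ _ => rfl
    ext j; simp only [mem_filter, mem_range]; omega
  have e3 : (∑ j ∈ range (k + 1 + b), if k < j then T (j + 1) else 0)
      = ∑ j ∈ range b, T (k + 2 + j) := by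
    rw [← sum_filter]
    refine sum_nbij' (fun j => j - (k + 1)) (fun j => k + 1 + j) ?_ ?_ ?_ ?_ ?_
    · intro j hk; simp only [mem_filter, mem_range] at hk ⊢; omega
    · intro j hk; simp only [mem_filter, mem_range] at hk ⊢; omega
    · intro j hk; simp only [mem_filter, mem_range] at hk ⊢; omega
    · intro j hk; simp only [mem_range] at hk ⊢; omega
    · intro j hk; simp only [mem_filter, mem_range] at hk ⊢; congr 1; omega
  rw [e1, e3, show k + 1 + b + 1 = k + 1 + 1 + b by omega, sum_range_add, sum_range_succ,
    sum_range_succ]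

theorem S2_smul {A : Type*} [AddCommGroup A] (m : ℕ) (c : ℤ) (T : ℕ → ℕ → A) :
    S2 m (fun i j => c • T i j) = c • S2 m T := by
  simp only [S2, smul_sum, smul_ite, smul_zero]

theorem S2_succ_last {A : Type*} [AddCommGroup A] (m : ℕ) (T : ℕ → ℕ → A) :
    S2 (m + 1) T = S2 m T + ∑ i ∈ range m, T i m := by
  unfold S2
  rw [sum_range_succ]
  have hz : (∑ j ∈ range (m + 1), if m < j then T m j else 0) = 0 := by
    refine sum_eq_zero fun j hj => ?_
    have := mem_range.1 hj
    rw [if_neg (by omega)]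
  rw [hz, add_zero, ← sum_add_distrib]
  refine sum_congr rfl fun i hi => ?_
  rw [sum_range_succ, if_pos (mem_range.1 hi)]

theorem S2_succ_first {A : Type*} [AddCommGroup A] (m : ℕ) (T : ℕ → ℕ → A) :
    S2 (m + 1) T = S2 m (fun i j => T (i + 1) (j + 1)) + ∑ j ∈ range m, T 0 (j + 1) := by
  unfold S2
  rw [sum_range_succ']
  congr 1
  · refine sum_congr rfl fun i hi => ?_
    rw [sum_range_succ']
    simp
  · rw [sum_range_succ']
    simp

theorem split_two {A : Type*} [AddCommGroup A] {m k : ℕ} (hk : k < m) (T : ℕ → ℕ → A) :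
    S2 (m + 1) T
      = S2 m (fun i j => if j < k then T i j else 0)
        + (∑ i ∈ range m, if i < k then T i k else 0)
        + (∑ i ∈ range m, if i < k then T i (k + 1) else 0)
        + S2 m (fun i j => if i < k ∧ k < j then T i (j + 1) else 0)
        + T k (k + 1)
        + (∑ j ∈ range m, if k < j then T k (j + 1) else 0)
        + (∑ j ∈ range m, if k < j then T (k + 1) (j + 1) else 0)
        + S2 m (fun i j => if k < i then T (i + 1) (j + 1) else 0) := by
  have e : S2 (m + 1) T = ∑ i ∈ range (m + 1), ∑ j ∈ range (m + 1),
    if i < j then T i j else 0 := rfl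
  rw [e, split_one hk]
  have e1 : (∑ j ∈ range (m + 1), if k < j then T k j else 0)
      = T k (k + 1) + ∑ j ∈ range m, if k < j then T k (j + 1) else 0 := by
    rw [split_one hk, if_neg (lt_irrefl k), if_pos (Nat.lt_succ_self k), add_zero]
    rw [sum_eq_zero, zero_add]
    · congr 1
      refine sum_congr rfl fun j _ => ?_
      split_ifs <;> first | rfl | omega
    · intro j _
      split_ifs <;> first | rfl | omega
  have e2 : (∑ j ∈ range (m + 1), if k + 1 < j then T (k + 1) j else 0)
      = ∑ j ∈ range m, if k < j then T (k + 1) (j + 1) else 0 := by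
    rw [split_one hk, if_neg (by omega), if_neg (lt_irrefl _), add_zero, add_zero]
    rw [sum_eq_zero, zero_add]
    · refine sum_congr rfl fun j _ => ?_
      split_ifs <;> first | rfl | omega
    · intro j _
      split_ifs <;> first | rfl | omega
  have e3 : (∑ i ∈ range m, if i < k then ∑ j ∈ range (m + 1), (if i < j then T i j else 0) else 0)
      = S2 m (fun i j => if j < k then T i j else 0)
        + (∑ i ∈ range m, if i < k then T i k else 0)
        + (∑ i ∈ range m, if i < k then T i (k + 1) else 0)
        + S2 m (fun i j => if i < k ∧ k < j then T i (j + 1) else 0) := by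
    unfold S2
    beta_reduce
    rw [← sum_add_distrib, ← sum_add_distrib, ← sum_add_distrib]
    refine sum_congr rfl fun i _ => ?_
    by_cases hi : i < k
    · rw [if_pos hi, if_pos hi, if_pos hi, split_one hk, if_pos hi, if_pos (by omega)]
      congr 1
      · congr 2
        refine sum_congr rfl fun j _ => ?_
        split_ifs <;> first | rfl | omega
      · refine sum_congr rfl fun j _ => ?_
        split_ifs <;> first | rfl | omega
    · rw [if_neg hi, if_neg hi, if_neg hi, sum_eq_zero, sum_eq_zero]
      · simp
      · intro j _
        split_ifs <;> first | rfl | omega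
      · intro j _
        split_ifs <;> first | rfl | omega
  have e4 : (∑ i ∈ range m,
        if k < i then ∑ j ∈ range (m + 1), (if i + 1 < j then T (i + 1) j else 0) else 0)
      = S2 m (fun i j => if k < i then T (i + 1) (j + 1) else 0) := by
    unfold S2
    beta_reduce
    refine sum_congr rfl fun i _ => ?_
    by_cases hi : k < i
    · rw [if_pos hi, sum_range_succ', if_neg (by omega), add_zero]
      refine sum_congr rfl fun j _ => ?_
      split_ifs <;> first | rfl | omega
    · rw [if_neg hi, sum_eq_zero]
      intro j _
      split_ifs <;> first | rfl | omega
  rw [e1, e2, e3, e4]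
  abel

theorem split_two_sum {A : Type*} [AddCommGroup A] (m : ℕ) (T : ℕ → ℕ → ℕ → A) :
    ∑ k ∈ range m, S2 (m + 1) (T k)
      = S2 m (fun i j => ∑ k ∈ range m, if j < k then T k i j else 0)
        + S2 m (fun i j => T j i j)
        + S2 m (fun i j => T j i (j + 1))
        + S2 m (fun i j => ∑ k ∈ range m, if i < k ∧ k < j then T k i (j + 1) else 0)
        + (∑ k ∈ range m, T k k (k + 1))
        + S2 m (fun i j => T i i (j + 1))
        + S2 m (fun i j => T i (i + 1) (j + 1))
        + S2 m (fun i j => ∑ k ∈ range m, if k < i then T k (i + 1) (j + 1) else 0) := by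
  rw [sum_congr rfl fun k hk => split_two (mem_range.1 hk) (T k)]
  simp only [sum_add_distrib, S2_sum]
  have e1 : (∑ k ∈ range m, ∑ i ∈ range m, if i < k then T k i k else 0)
      = S2 m (fun i j => T j i j) := by
    rw [sum_comm]; rfl
  have e2 : (∑ k ∈ range m, ∑ i ∈ range m, if i < k then T k i (k + 1) else 0)
      = S2 m (fun i j => T j i (j + 1)) := by
    rw [sum_comm]; rfl
  rw [e1, e2]
  rfl

theorem pc_comm' {n p i j : ℕ} (hij : i < j) {F : (ℕ → L) → L} (hF : Loc n F)
    (H G : (ℕ → L) → L) :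
    pc n i (pc p j H G) F
      = sgn (((n : ℤ) - 1) * ((p : ℤ) - 1)) • pc p (j + n - 1) (pc n i H F) G := by
  rw [pc_comm hij hF, smul_smul]
  rcases sgn_cases (((n : ℤ) - 1) * ((p : ℤ) - 1)) with h | h <;> simp [h]

/-- Moving `M` (of degree two) from the inside at a later slot to the outside. -/
theorem pc_comm_two {n i j : ℕ} (hij : i < j) {F : (ℕ → L) → L} (hF : Loc n F)
    (H M : (ℕ → L) → L) :
    pc n i (pc 2 j H M) F = sgn ((n : ℤ) - 1) • pc 2 (j + n - 1) (pc n i H F) M := by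
  rw [pc_comm' hij hF]
  congr 2
  norm_num

/-- Moving `M` (of degree two) from the outside at an earlier slot to the inside. -/
theorem pc_comm_two' {p i j : ℕ} (hij : i < j) {M : (ℕ → L) → L} (hM : Loc 2 M)
    (H G : (ℕ → L) → L) :
    pc 2 i (pc p j H G) M = sgn ((p : ℤ) - 1) • pc p (j + 1) (pc 2 i H M) G := by
  rw [pc_comm' hij hM]
  congr 2
  norm_num

section Main

variable (m n p : ℕ) (H F G M : (ℕ → L) → L)

/-- The brace `h{f,g,μ}`. -/
def X1 : (ℕ → L) → L := S2 m fun i j => ∑ k ∈ range m,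
  if j < k then pc 2 (k + n + p - 2) (pc p (j + n - 1) (pc n i H F) G) M else 0

/-- The brace `h{f,μ,g}`. -/
def X2 : (ℕ → L) → L := S2 m fun i j => ∑ k ∈ range m,
  if i < k ∧ k < j then pc p (j + n) (pc 2 (k + n - 1) (pc n i H F) M) G else 0

/-- The brace `h{μ,f,g}`. -/
def X3 : (ℕ → L) → L := S2 m fun i j => ∑ k ∈ range m,
  if k < i then pc p (j + n) (pc n (i + 1) (pc 2 k H M) F) G else 0

/-- `h{ff,g}` with `deg ff = n + 1`. -/
def Y1 (FF : (ℕ → L) → L) : (ℕ → L) → L :=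
  S2 m fun i j => pc p (j + n) (pc (n + 1) i H FF) G

/-- `h{f,gg}` with `deg gg = p + 1`. -/
def Y2 (GG : (ℕ → L) → L) : (ℕ → L) → L :=
  S2 m fun i j => pc (p + 1) (j + n - 1) (pc n i H F) GG

variable {m n p H F G M}

theorem Y1_smul (hH : ∀ k < m, LinAt k H) (c : ℤ) (FF : (ℕ → L) → L) :
    Y1 m n p H G (c • FF) = c • Y1 m n p H G FF := by
  unfold Y1
  rw [← S2_smul]
  refine S2_congr fun i j hij hj => ?_
  rw [pc_right_smul (hH i (by omega)), pc_left_smul]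

theorem Y2_smul (hH : ∀ k < m, LinAt k H) (hF : Loc n F) (c : ℤ) (GG : (ℕ → L) → L) :
    Y2 m n p H F (c • GG) = c • Y2 m n p H F GG := by
  unfold Y2
  rw [← S2_smul]
  refine S2_congr fun i j hij hj => ?_
  rw [pc_right_smul (linAt_pc hij (hH j hj) hF)]

theorem identity_one (hH : ∀ k < m, LinAt k H) (hF : Loc n F) (hM : Loc 2 M) :
    tc (m + n + p - 2) 2 (br2 m n p H F G) M
      = X1 m n p H F G M + sgn ((p : ℤ) - 1) • X2 m n p H F G M
        + (sgn ((n : ℤ) - 1) * sgn ((p : ℤ) - 1)) • X3 m n p H F G M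
        + sgn ((p : ℤ) - 1) • Y1 m n p H G (tc n 2 F M)
        + Y2 m n p H F (tc p 2 G M) := by
  rw [tc_eq, br2_eq]
  have e0 : ∀ k, pc 2 k (S2 m fun i j => pc p (j + n - 1) (pc n i H F) G) M
      = S2 m fun i j => pc 2 k (pc p (j + n - 1) (pc n i H F) G) M :=
    fun k => S2_map (pcL 2 k M) m _
  simp only [e0]
  rw [← S2_sum]
  unfold X1 X2 X3 Y1 Y2
  simp only [← S2_smul, ← S2_add]
  refine S2_congr fun i j hij hj => ?_
  rw [split_slots hij hj]
  have t1 : (∑ k ∈ range m,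
        if k < i then pc 2 k (pc p (j + n - 1) (pc n i H F) G) M else 0)
      = (sgn ((n : ℤ) - 1) * sgn ((p : ℤ) - 1)) • ∑ k ∈ range m,
        if k < i then pc p (j + n) (pc n (i + 1) (pc 2 k H M) F) G else 0 := by
    rw [smul_sum]
    refine sum_congr rfl fun k _ => ?_
    split_ifs with hk
    · rw [pc_comm_two' (by omega) hM, pc_comm_two' hk hM, pc_left_smul, smul_smul, mul_comm,
        show j + n - 1 + 1 = j + n by omega]
    · simp
  have t2 : (∑ k ∈ range n, pc 2 (i + k) (pc p (j + n - 1) (pc n i H F) G) M)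
      = sgn ((p : ℤ) - 1) • pc p (j + n) (pc (n + 1) i H (tc n 2 F M)) G := by
    rw [tc_eq, pc_right_sum (hH i (by omega)), pc_left_sum, smul_sum]
    refine sum_congr rfl fun k hk => ?_
    have hk := mem_range.1 hk
    rw [pc_comm_two' (by omega) hM, pc_nest hk (hH i (by omega)),
        show j + n - 1 + 1 = j + n by omega]
    rfl
  have t3 : (∑ k ∈ range m, if i < k ∧ k < j then
        pc 2 (k + n - 1) (pc p (j + n - 1) (pc n i H F) G) M else 0)
      = sgn ((p : ℤ) - 1) • ∑ k ∈ range m,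
        if i < k ∧ k < j then pc p (j + n) (pc 2 (k + n - 1) (pc n i H F) M) G else 0 := by
    rw [smul_sum]
    refine sum_congr rfl fun k _ => ?_
    split_ifs with hk
    · rw [pc_comm_two' (by omega) hM, show j + n - 1 + 1 = j + n by omega]
    · simp
  have t4 : (∑ k ∈ range p, pc 2 (j + n - 1 + k) (pc p (j + n - 1) (pc n i H F) G) M)
      = pc (p + 1) (j + n - 1) (pc n i H F) (tc p 2 G M) := by
    rw [tc_eq, pc_right_sum (linAt_pc hij (hH j hj) hF)]
    refine sum_congr rfl fun k hk => ?_
    rw [pc_nest (mem_range.1 hk) (linAt_pc hij (hH j hj) hF)]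
    rfl
  rw [t1, t2, t3, t4]
  abel

theorem identity_two (hH : ∀ k < m, LinAt k H) (hF : Loc n F) (hG : Loc p G) :
    S2 (m + 1) (fun i j => pc p (j + n - 1) (pc n i (tc m 2 H M) F) G)
      = X3 m n p H F G M + sgn ((n : ℤ) - 1) • X2 m n p H F G M
        + (sgn ((n : ℤ) - 1) * sgn ((p : ℤ) - 1)) • X1 m n p H F G M
        + Y1 m n p H G (tc 2 n M F)
        + sgn ((n : ℤ) - 1) • Y2 m n p H F (tc 2 p M G)
        + ∑ k ∈ range m, pc (n + p) k H (pc p n (pc n 0 M F) G) := by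
  have e0 : S2 (m + 1) (fun i j => pc p (j + n - 1) (pc n i (tc m 2 H M) F) G)
      = ∑ k ∈ range m, S2 (m + 1)
        (fun i j => pc p (j + n - 1) (pc n i (pc 2 k H M) F) G) := by
    rw [← S2_sum]
    refine S2_congr fun i j _ _ => ?_
    rw [tc_eq, pc_left_sum, pc_left_sum]
  rw [e0, split_two_sum]
  have t1 : S2 m (fun i j => ∑ k ∈ range m,
        if j < k then pc p (j + n - 1) (pc n i (pc 2 k H M) F) G else 0)
      = (sgn ((n : ℤ) - 1) * sgn ((p : ℤ) - 1)) • X1 m n p H F G M := by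
    unfold X1
    rw [← S2_smul]
    refine S2_congr fun i j hij hj => ?_
    rw [smul_sum]
    refine sum_congr rfl fun k _ => ?_
    split_ifs with hk
    · rw [pc_comm_two (by omega) hF, pc_left_smul, pc_comm_two (by omega) hG, smul_smul,
        show k + n - 1 + p - 1 = k + n + p - 2 by omega]
    · simp
  have t2 : S2 m (fun i j => pc p (j + n - 1) (pc n i (pc 2 j H M) F) G)
        + S2 m (fun i j => pc p (j + 1 + n - 1) (pc n i (pc 2 j H M) F) G)
      = sgn ((n : ℤ) - 1) • Y2 m n p H F (tc 2 p M G) := by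
    unfold Y2
    rw [← S2_smul, ← S2_add]
    refine S2_congr fun i j hij hj => ?_
    have hl := linAt_pc hij (hH j hj) hF
    rw [tc_eq, pc_right_sum hl, sum_range_succ, sum_range_one, pc_comm_two hij hF,
      pc_left_smul, pc_left_smul, smul_add]
    have a0 := pc_nest (p := p) (show 0 < 2 by omega) hl M G
    have a1 := pc_nest (p := p) (show 1 < 2 by omega) hl M G
    rw [show 2 + p - 1 = p + 1 by omega] at a0 a1
    rw [← a0, ← a1, show j + 1 + n - 1 = j + n - 1 + 1 by omega, add_zero]
  have t3 : S2 m (fun i j => ∑ k ∈ range m,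
        if i < k ∧ k < j then pc p (j + 1 + n - 1) (pc n i (pc 2 k H M) F) G else 0)
      = sgn ((n : ℤ) - 1) • X2 m n p H F G M := by
    unfold X2
    rw [← S2_smul]
    refine S2_congr fun i j hij hj => ?_
    rw [smul_sum]
    refine sum_congr rfl fun k _ => ?_
    split_ifs with hk
    · rw [pc_comm_two hk.1 hF, pc_left_smul, show j + 1 + n - 1 = j + n by omega]
    · simp
  have t4 : (∑ k ∈ range m, pc p (k + 1 + n - 1) (pc n k (pc 2 k H M) F) G)
      = ∑ k ∈ range m, pc (n + p) k H (pc p n (pc n 0 M F) G) := by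
    refine sum_congr rfl fun k hk => ?_
    have hl := hH k (mem_range.1 hk)
    have a0 := pc_nest (p := n) (show 0 < 2 by omega) hl M F
    rw [add_zero] at a0
    rw [a0, show k + 1 + n - 1 = k + n by omega, pc_nest (by omega) hl,
      show 2 + n - 1 + p - 1 = n + p by omega]
  have t5 : S2 m (fun i j => pc p (j + 1 + n - 1) (pc n i (pc 2 i H M) F) G)
        + S2 m (fun i j => pc p (j + 1 + n - 1) (pc n (i + 1) (pc 2 i H M) F) G)
      = Y1 m n p H G (tc 2 n M F) := by
    unfold Y1
    rw [← S2_add]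
    refine S2_congr fun i j hij hj => ?_
    have hl := hH i (by omega)
    rw [tc_eq, pc_right_sum hl, sum_range_succ, sum_range_one, pc_left_add]
    have a0 := pc_nest (p := n) (show 0 < 2 by omega) hl M F
    have a1 := pc_nest (p := n) (show 1 < 2 by omega) hl M F
    rw [show 2 + n - 1 = n + 1 by omega] at a0 a1
    rw [← a0, ← a1, show j + 1 + n - 1 = j + n by omega, add_zero]
  have t6 : S2 m (fun i j => ∑ k ∈ range m,
        if k < i then pc p (j + 1 + n - 1) (pc n (i + 1) (pc 2 k H M) F) G else 0)
      = X3 m n p H F G M := by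
    unfold X3
    refine S2_congr fun i j hij hj => ?_
    rw [show j + 1 + n - 1 = j + n by omega]
  rw [t1, t3, t4, t6, ← t2, ← t5]
  abel

theorem identity_three (hM : ∀ k < 2, LinAt k M) (hF : Loc n F) :
    S2 (m + 1) (fun i j => pc p (j + n - 1) (pc n i (tc 2 m M H) F) G)
      = tc 2 (m + n + p - 2) M (br2 m n p H F G)
        + pc p (m + n - 1) (pc (m + n - 1) 0 M (tc m n H F)) G
        + sgn (((m : ℤ) - 1) * ((n : ℤ) - 1)) •
          pc (m + p - 1) n (pc n 0 M F) (tc m p H G) := by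
  have h0 := hM 0 (by omega)
  have h1 := hM 1 (by omega)
  have e0 : S2 (m + 1) (fun i j => pc p (j + n - 1) (pc n i (tc 2 m M H) F) G)
      = S2 (m + 1) (fun i j => pc p (j + n - 1) (pc n i (pc m 0 M H) F) G)
       + S2 (m + 1) (fun i j => pc p (j + n - 1) (pc n i (pc m 1 M H) F) G) := by
    rw [← S2_add]
    refine S2_congr fun i j _ _ => ?_
    rw [tc_eq, sum_range_succ, sum_range_one, pc_left_add, pc_left_add]
  rw [e0, S2_succ_last, S2_succ_first, tc_eq 2, sum_range_succ, sum_range_one, br2_eq]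
  have t1 : S2 m (fun i j => pc p (j + n - 1) (pc n i (pc m 0 M H) F) G)
      = pc (m + n + p - 2) 0 M (S2 m fun i j => pc p (j + n - 1) (pc n i H F) G) := by
    obtain ⟨φ, hφ⟩ := pc_right h0 (m + n + p - 2)
    rw [hφ, S2_map]
    refine S2_congr fun i j hij hj => ?_
    rw [← hφ]
    have a := pc_nest (p := n) (show i < m by omega) h0 H F
    have b := pc_nest (p := p) (show j + n - 1 < m + n - 1 by omega) h0 (pc n i H F) G
    rw [zero_add] at a b
    rw [a, b, show m + n - 1 + p - 1 = m + n + p - 2 by omega]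
  have t2 : S2 m (fun i j => pc p (j + 1 + n - 1) (pc n (i + 1) (pc m 1 M H) F) G)
      = pc (m + n + p - 2) 1 M (S2 m fun i j => pc p (j + n - 1) (pc n i H F) G) := by
    obtain ⟨φ, hφ⟩ := pc_right h1 (m + n + p - 2)
    rw [hφ, S2_map]
    refine S2_congr fun i j hij hj => ?_
    rw [← hφ]
    have a := pc_nest (p := n) (show i < m by omega) h1 H F
    have b := pc_nest (p := p) (show j + n - 1 < m + n - 1 by omega) h1 (pc n i H F) G
    rw [show j + 1 + n - 1 = 1 + (j + n - 1) by omega, add_comm i 1, a, b,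
      show m + n - 1 + p - 1 = m + n + p - 2 by omega]
  have t3 : (∑ i ∈ range m, pc p (m + n - 1) (pc n i (pc m 0 M H) F) G)
      = pc p (m + n - 1) (pc (m + n - 1) 0 M (tc m n H F)) G := by
    rw [tc_eq, pc_right_sum h0, pc_left_sum]
    refine sum_congr rfl fun i hi => ?_
    have a := pc_nest (p := n) (mem_range.1 hi) h0 H F
    rw [zero_add] at a
    rw [a]
  have t4 : (∑ j ∈ range m, pc p (j + 1 + n - 1) (pc n 0 (pc m 1 M H) F) G)
      = sgn (((m : ℤ) - 1) * ((n : ℤ) - 1)) •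
          pc (m + p - 1) n (pc n 0 M F) (tc m p H G) := by
    have hl := linAt_pc (show 0 < 1 by omega) h1 hF
    rw [show 1 + n - 1 = n by omega] at hl
    rw [tc_eq, pc_right_sum hl, smul_sum]
    refine sum_congr rfl fun j hj => ?_
    rw [pc_comm' (by omega) hF, pc_left_smul, show 1 + n - 1 = n by omega,
      ← pc_nest (mem_range.1 hj) hl, show j + 1 + n - 1 = n + j by omega, mul_comm]
  rw [t1, t2, t3, t4]
  abel

theorem cup_comp (hM : ∀ k < 2, LinAt k M) (hF : Loc n F) (hH : Loc m H) :
    tc (n + p) m (pc p n (pc n 0 M F) G) H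
      = sgn (((m : ℤ) - 1) * ((p : ℤ) - 1)) •
          pc p (m + n - 1) (pc (m + n - 1) 0 M (tc n m F H)) G
        + pc (m + p - 1) n (pc n 0 M F) (tc p m G H) := by
  have h0 := hM 0 (by omega)
  have h1 := hM 1 (by omega)
  have hl := linAt_pc (show 0 < 1 by omega) h1 hF
  rw [show 1 + n - 1 = n by omega] at hl
  rw [tc_eq, sum_range_add, tc_eq, tc_eq, pc_right_sum h0, pc_left_sum, pc_right_sum hl, smul_sum]
  congr 1
  · refine sum_congr rfl fun k hk => ?_
    have hk := mem_range.1 hk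
    have a := pc_nest (p := m) hk h0 F H
    rw [zero_add] at a
    rw [pc_comm' hk hH, a, add_comm n m]
  · refine sum_congr rfl fun k hk => ?_
    rw [pc_nest (mem_range.1 hk) hl, add_comm p m]

end Main

theorem cocycle_eq {μ : C K L 2} {n : ℕ} {F : (ℕ → L) → L} (hF : delta μ n F = 0) :
    tc n 2 F (ex μ) = sgn ((n : ℤ) - 1) • tc 2 n (ex μ) F := by
  rw [delta_eq, neg_eq_zero, gb_eq, sub_eq_zero] at hF
  rw [hF]
  congr 2
  norm_num

/-- the Leibniz rule in tangent cohomology: for cocycles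
`h, f, g`, the failure of the left Leibniz rule is the coboundary
`−(-1)^{p-1} δ_μ⟨h|fg⟩`, so the Leibniz rule holds in `H_μ(C)`. -/
theorem leibniz_rule_in_tangent_cohomology
    (μ : C K L 2) {m n p : ℕ} (h : C K L m) (f : C K L n) (g : C K L p)
    (hh : delta μ m (ex h) = 0) (hf : delta μ n (ex f) = 0)
    (hg : delta μ p (ex g) = 0) :
    gb m (n + p) (ex h) (cup μ n p (ex f) (ex g))
        - cup μ (m + n - 1) p (gb m n (ex h) (ex f)) (ex g)
        - sgn (((m : ℤ) - 1) * (n : ℤ)) •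
            cup μ n (m + p - 1) (ex f) (gb m p (ex h) (ex g))
      = -(sgn ((p : ℤ) - 1) •
            delta μ (m + n + p - 2) (br2 m n p (ex h) (ex f) (ex g))) := by
  have lH : ∀ k < m, LinAt k (ex h) := fun k hk => linAt_ex h hk
  have lM : ∀ k < 2, LinAt k (ex μ) := fun k hk => linAt_ex μ hk
  have kH := loc_ex h
  have kF := loc_ex f
  have kG := loc_ex g
  have kM := loc_ex μ
  have lF := linAt_pc (show 0 < 1 by omega) (lM 1 (by omega)) kF
  rw [show 1 + n - 1 = n by omega] at lF
  have ch := cocycle_eq hh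
  have cf := cocycle_eq hf
  have cg := cocycle_eq hg
  generalize ex h = H at *
  generalize ex f = F at *
  generalize ex g = G at *
  have i1 := identity_one (p := p) (G := G) lH kF kM
  have i2 := identity_two (M := ex μ) lH kF kG
  have i3 := identity_three (m := m) (p := p) (H := H) (G := G) lM kF
  have i4 := cup_comp (p := p) (G := G) lM kF kH
  have i5 : S2 (m + 1) (fun i j => pc p (j + n - 1) (pc n i (tc m 2 H (ex μ)) F) G)
      = sgn ((m : ℤ) - 1) •
        S2 (m + 1) (fun i j => pc p (j + n - 1) (pc n i (tc 2 m (ex μ) H) F) G) := by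
    rw [ch, ← S2_smul]
    simp only [pc_left_smul]
  rw [cf, cg, Y1_smul lH, Y2_smul lH kF] at i1
  rw [i2, i3] at i5
  -- the signs involving truncated degrees
  have s1 : sgn ((m + n - 1 : ℕ) : ℤ) •
        pc p (m + n - 1) (pc (m + n - 1) 0 (ex μ) (gb m n H F)) G
      = (- (sgn m * sgn n)) • pc p (m + n - 1) (pc (m + n - 1) 0 (ex μ) (gb m n H F)) G := by
    by_cases hmn : m + n = 0
    · obtain ⟨rfl, rfl⟩ : m = 0 ∧ n = 0 := by omega
      have : gb 0 0 H F = 0 := by simp [gb_eq, tc_eq]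
      rw [this, pc_right_zero (lM 0 (by omega)), pc_left_zero, smul_zero, smul_zero]
    · rw [Nat.cast_sub (by omega), sgn_sub']
      push_cast
      rw [sgn_add', sgn_one']
      congr 1
      ring
  have s2 : sgn ((((m + n + p - 2 : ℕ) : ℤ) - 1) * (((2 : ℕ) : ℤ) - 1)) •
        tc 2 (m + n + p - 2) (ex μ) (br2 m n p H F G)
      = (- (sgn m * sgn n * sgn p)) • tc 2 (m + n + p - 2) (ex μ) (br2 m n p H F G) := by
    by_cases hm : m ≤ 1
    · have : br2 m n p H F G = 0 := by
        rw [br2_eq]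
        unfold S2
        refine sum_eq_zero fun i hi => sum_eq_zero fun j hj => ?_
        have := mem_range.1 hj
        rw [if_neg (by omega)]
      rw [this, tc_eq, sum_range_succ, sum_range_one, pc_right_zero (lM 0 (by omega)),
        pc_right_zero (lM 1 (by omega))]
      simp
    · rw [Nat.cast_sub (by omega),
        show (((m + n + p : ℕ) : ℤ) - ((2 : ℕ) : ℤ) - 1) * (((2 : ℕ) : ℤ) - 1)
          = (m : ℤ) + n + p - 1 - 1 - 1 by push_cast; ring]
      simp only [sgn_sub', sgn_add', sgn_one']
      congr 1
      ring
  have c1 : tc m (n + p) H (sgn (n : ℤ) • pc p n (pc n 0 (ex μ) F) G)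
      = sgn (n : ℤ) • ∑ k ∈ range m, pc (n + p) k H (pc p n (pc n 0 (ex μ) F) G) := by
    rw [tc_eq, smul_sum]
    refine sum_congr rfl fun k hk => ?_
    rw [pc_right_smul (lH k (mem_range.1 hk))]
  have c2 : tc (n + p) m (sgn (n : ℤ) • pc p n (pc n 0 (ex μ) F) G) H
      = sgn (n : ℤ) • tc (n + p) m (pc p n (pc n 0 (ex μ) F) G) H := by
    rw [tc_eq, tc_eq, smul_sum]
    refine sum_congr rfl fun k hk => ?_
    rw [pc_left_smul]
  rw [delta_eq, gb_eq (m + n + p - 2), s2, i1, cup_eq, cup_eq, cup_eq, s1, gb_eq m (n + p), c1, c2,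
    i4, gb_eq m n, gb_eq m p, pc_right_sub (lM 0 (by omega)), pc_left_sub,
    pc_right_smul (lM 0 (by omega)), pc_left_smul, pc_right_sub lF, pc_right_smul lF]
  generalize (∑ k ∈ range m, pc (n + p) k H (pc p n (pc n 0 (ex μ) F) G)) = Z at *
  generalize X1 m n p H F G (ex μ) = x1 at *
  generalize X2 m n p H F G (ex μ) = x2 at *
  generalize X3 m n p H F G (ex μ) = x3 at *
  generalize Y1 m n p H G (tc 2 n (ex μ) F) = y1 at *
  generalize Y2 m n p H F (tc 2 p (ex μ) G) = y2 at *
  generalize tc 2 (m + n + p - 2) (ex μ) (br2 m n p H F G) = B at *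
  generalize pc p (m + n - 1) (pc (m + n - 1) 0 (ex μ) (tc m n H F)) G = q1 at *
  generalize pc p (m + n - 1) (pc (m + n - 1) 0 (ex μ) (tc n m F H)) G = q2 at *
  generalize pc (m + p - 1) n (pc n 0 (ex μ) F) (tc m p H G) = q3 at *
  generalize pc (m + p - 1) n (pc n 0 (ex μ) F) (tc p m G H) = q4 at *
  clear i1 i2 i3 i4 s1 s2 c1 c2 ch cf cg hh hf hg
  have i6 := eq_sub_of_add_eq (eq_sub_of_add_eq (eq_sub_of_add_eq (eq_sub_of_add_eq
    (eq_sub_of_add_eq i5))))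
  subst i6
  clear i5
  push_cast
  simp only [mul_sub, sub_mul, mul_add, add_mul, mul_one, one_mul, sgn_sub', sgn_add', sgn_one']
  rcases sgn_cases (m : ℤ) with am | am <;> rcases sgn_cases (n : ℤ) with an | an <;>
  rcases sgn_cases (p : ℤ) with ap | ap <;> rcases sgn_cases ((m : ℤ) * n) with amn | amn <;>
  rcases sgn_cases ((m : ℤ) * p) with amp | amp <;> simp [am, an, ap, amn, amp] <;> abel

end OperadPrelude
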